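/- Let Ω ⊆ ℝⁿ be open, F : Ω × ℝ × ℝⁿ × Sym(n) → ℝ continuous, and let 𝒰 be a family of upper semicontinuous viscosity subsolutions of F(·,u,Du,D²u) ≥ 0 on Ω. Define U(x) := sup{ u(x) : u ∈ 𝒰 } and suppose U(x) < ∞ for all x ∈ Ω and U is upper semicontinuous on Ω. Then U is a viscosity subsolution of F(·,U,DU,D²U) ≥ 0 on Ω. -/

import Mathlib

/-!
The supremum is handled by perturbing contact points. Let `(p, X)` lie in the super-jet of `U` at
`x`, and let `φ(z) = ⟪p, z⟫ + ½⟨Xz, z⟩ + 2e‖z‖²` be the corresponding paraboloid, opened up by `2e`,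
so that `U (x + z) - U x - φ z ≤ -e‖z‖²` near `0`. Choose `u ∈ 𝒰` with `u x > U x - η`. The upper
semicontinuous function `u (x + z) - φ z` attains its maximum over a small closed ball at some `z`,
and comparison with the value at `0` gives `e‖z‖² ≤ η`. For small `η` the point `z` is therefore
interior, so the second-order jet of `φ` at `z` is in the super-jet of `u` at `x + z`
(`exists_nearby_jet`). The same two inequalities force `u (x + z)` to be close to `U x`, and the
subsolution inequality for `u` at `x + z` passes to the limit `e → 0` by continuity of `F`.
Since the perturbed jets converge to `(p, X)` itself, no ellipticity of `F` is needed.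
-/

open scoped RealInnerProductSpace
open Filter

noncomputable section

/-- The quadratic form `z ↦ ⟨Xz, z⟩` of a matrix `X` on `ℝⁿ`. -/
def quadForm {n : ℕ} (X : Matrix (Fin n) (Fin n) ℝ) (z : EuclideanSpace ℝ (Fin n)) : ℝ :=
  ⟪Matrix.toEuclideanLin X z, z⟫

/-- Second-order super-jet `J²⁺u(x)` of `u : Ω → ℝ` at `x` (relative to the set `Ω`):
`(p,X) ∈ J²⁺u(x)` iff `X` is symmetric and
`u(x+z) ≤ u(x) + p·z + ½⟨Xz,z⟩ + o(|z|²)` as `z → 0` within `Ω`. -/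
def J2plus {n : ℕ} (Ω : Set (EuclideanSpace ℝ (Fin n))) (u : EuclideanSpace ℝ (Fin n) → ℝ)
    (x p : EuclideanSpace ℝ (Fin n)) (X : Matrix (Fin n) (Fin n) ℝ) : Prop :=
  X.IsSymm ∧
  ∀ ε > 0, ∃ δ > 0, ∀ z : EuclideanSpace ℝ (Fin n), ‖z‖ < δ → x + z ∈ Ω →
    u (x + z) ≤ u x + ⟪p, z⟫ + (1 / 2) * quadForm X z + ε * ‖z‖ ^ 2

/-- Second-order sub-jet `J²⁻u(x)` of `u : Ω → ℝ` at `x` (relative to the set `Ω`). -/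
def J2minus {n : ℕ} (Ω : Set (EuclideanSpace ℝ (Fin n))) (u : EuclideanSpace ℝ (Fin n) → ℝ)
    (x p : EuclideanSpace ℝ (Fin n)) (X : Matrix (Fin n) (Fin n) ℝ) : Prop :=
  X.IsSymm ∧
  ∀ ε > 0, ∃ δ > 0, ∀ z : EuclideanSpace ℝ (Fin n), ‖z‖ < δ → x + z ∈ Ω →
    u x + ⟪p, z⟫ + (1 / 2) * quadForm X z - ε * ‖z‖ ^ 2 ≤ u (x + z)

/-- `u` is a viscosity subsolution of `F(·,u,Du,D²u) = 0` on `Ω`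
(`F` given on tuples `(x, r, p, X)`). -/
def ViscSubsol {n : ℕ} (Ω : Set (EuclideanSpace ℝ (Fin n)))
    (F : EuclideanSpace ℝ (Fin n) × ℝ × EuclideanSpace ℝ (Fin n) ×
      Matrix (Fin n) (Fin n) ℝ → ℝ) (u : EuclideanSpace ℝ (Fin n) → ℝ) : Prop :=
  ∀ x ∈ Ω, ∀ p X, J2plus Ω u x p X → 0 ≤ F (x, u x, p, X)

/-- Second-order expansion of a quadratic form; the symmetry of `X` merges the two cross terms. -/
lemma quadForm_add {n : ℕ} {X : Matrix (Fin n) (Fin n) ℝ} (hX : X.IsSymm)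
    (z h : EuclideanSpace ℝ (Fin n)) :
    quadForm X (z + h) = quadForm X z + 2 * ⟪Matrix.toEuclideanLin X z, h⟫ + quadForm X h := by
  have hs : ⟪Matrix.toEuclideanLin X h, z⟫ = ⟪Matrix.toEuclideanLin X z, h⟫ := by
    have hH : X.IsHermitian := by
      rw [Matrix.IsHermitian, Matrix.conjTranspose_eq_transpose_of_trivial]; exact hX
    rw [(Matrix.isSymmetric_toEuclideanLin_iff.mpr hH) h z, real_inner_comm]
  simp only [quadForm, map_add, inner_add_left, inner_add_right, hs]
  ring

lemma quadForm_add_smul_one {n : ℕ} (X : Matrix (Fin n) (Fin n) ℝ) (c : ℝ)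
    (h : EuclideanSpace ℝ (Fin n)) :
    quadForm (X + c • (1 : Matrix (Fin n) (Fin n) ℝ)) h = quadForm X h + c * ‖h‖ ^ 2 := by
  have h1 : Matrix.toEuclideanLin (1 : Matrix (Fin n) (Fin n) ℝ) h = h := by
    ext i; simp
  simp only [quadForm, map_add, map_smul, LinearMap.add_apply, LinearMap.smul_apply, h1,
    inner_add_left, real_inner_smul_left, real_inner_self_eq_norm_sq]

lemma continuous_quadForm {n : ℕ} (X : Matrix (Fin n) (Fin n) ℝ) : Continuous (quadForm X) := by
  have : Continuous (Matrix.toEuclideanLin X) := LinearMap.continuous_of_finiteDimensional _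
  unfold quadForm
  fun_prop

/-- Every element of the super-jet of the supremum `U` at `x` is approximated by elements of
super-jets of members of the family, at nearby points and with nearby values. -/
lemma exists_nearby_jet {n : ℕ} {Ω : Set (EuclideanSpace ℝ (Fin n))} (hΩ : IsOpen Ω)
    {𝒰 : Set (EuclideanSpace ℝ (Fin n) → ℝ)}
    (husc : ∀ u ∈ 𝒰, UpperSemicontinuousOn u Ω)
    {U : EuclideanSpace ℝ (Fin n) → ℝ}
    (hU : ∀ x ∈ Ω, IsLUB ((fun u : EuclideanSpace ℝ (Fin n) → ℝ => u x) '' 𝒰) (U x))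
    {x p : EuclideanSpace ℝ (Fin n)} {X : Matrix (Fin n) (Fin n) ℝ} (hx : x ∈ Ω)
    (hJ : J2plus Ω U x p X) {e : ℝ} (he : 0 < e) :
    ∃ u ∈ 𝒰, ∃ z, ‖z‖ ≤ e ∧ x + z ∈ Ω ∧ |u (x + z) - U x| ≤ e ∧
      J2plus Ω u (x + z) (p + Matrix.toEuclideanLin X z + (4 * e) • z)
        (X + (4 * e) • (1 : Matrix (Fin n) (Fin n) ℝ)) := by
  obtain ⟨hX, hJ⟩ := hJ
  obtain ⟨δ, hδ, hJ⟩ := hJ e he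
  obtain ⟨ρ, hρ, hball⟩ := Metric.isOpen_iff.mp hΩ x hx
  have hq := continuous_quadForm X
  have hcont : Continuous fun z : EuclideanSpace ℝ (Fin n) => ⟪p, z⟫ + (1 / 2) * quadForm X z := by
    fun_prop
  obtain ⟨σ, hσ, hsmall⟩ := Metric.continuous_iff.mp hcont 0 (e / 2) (by positivity)
  obtain ⟨r, hr, hrδ, hrρ, hrσ, hre, hr1⟩ : ∃ r : ℝ, 0 < r ∧ 2 * r < δ ∧ 2 * r < ρ ∧ 2 * r < σ ∧
      r ≤ e ∧ 2 * r ≤ 1 := by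
    have hm : 0 < min (min δ ρ) (min σ (min e 1)) := by positivity
    refine ⟨min (min δ ρ) (min σ (min e 1)) / 3, by positivity, ?_⟩
    have h1 : min (min δ ρ) (min σ (min e 1)) ≤ δ := by simp
    have h2 : min (min δ ρ) (min σ (min e 1)) ≤ ρ := by simp
    have h3 : min (min δ ρ) (min σ (min e 1)) ≤ σ := by simp
    have h4 : min (min δ ρ) (min σ (min e 1)) ≤ e := by simp
    have h5 : min (min δ ρ) (min σ (min e 1)) ≤ 1 := by simp
    refine ⟨?_, ?_, ?_, ?_, ?_⟩ <;> linarith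
  have hη : 0 < e * r ^ 2 := by positivity
  obtain ⟨_, ⟨u, hu, rfl⟩, hux, -⟩ := (hU x hx).exists_between (sub_lt_self (U x) hη)
  dsimp only at hux
  set φ : EuclideanSpace ℝ (Fin n) → ℝ :=
    fun z => ⟪p, z⟫ + (1 / 2) * quadForm X z + 2 * e * ‖z‖ ^ 2 with hφ
  have hφc : Continuous φ := by fun_prop
  have hφ0 : φ 0 = 0 := by simp [hφ, quadForm]
  have hsub : Metric.closedBall x (2 * r) ⊆ Ω :=
    (Metric.closedBall_subset_ball hrρ).trans hball
  have hgusc : UpperSemicontinuousOn (fun w => u w + -φ (w - x)) (Metric.closedBall x (2 * r)) :=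
    ((husc u hu).mono hsub).add
      ((by fun_prop : Continuous fun w => -φ (w - x)).upperSemicontinuous.upperSemicontinuousOn _)
  obtain ⟨y, hy, hmax⟩ := hgusc.exists_isMaxOn
    ⟨x, Metric.mem_closedBall_self (by positivity)⟩ (isCompact_closedBall x (2 * r))
  obtain ⟨z, rfl⟩ : ∃ z, y = x + z := ⟨y - x, by simp⟩
  have hz2 : ‖z‖ ≤ 2 * r := by simpa [dist_eq_norm] using hy
  have hmax' : ∀ w, ‖w‖ ≤ 2 * r → u (x + w) - φ w ≤ u (x + z) - φ z := fun w hw => by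
    have := hmax (show x + w ∈ Metric.closedBall x (2 * r) by simpa [dist_eq_norm] using hw)
    simpa [sub_eq_add_neg] using this
  have h0 : u x ≤ u (x + z) - φ z := by
    simpa [hφ0] using hmax' 0 (by simp; positivity)
  have huU : u (x + z) ≤ U (x + z) := (hU _ (hsub hy)).1 ⟨u, hu, rfl⟩
  have hUz := hJ z (by linarith) (hsub hy)
  have hφz : φ z = ⟪p, z⟫ + (1 / 2) * quadForm X z + 2 * e * ‖z‖ ^ 2 := rfl
  -- Comparing the maximum with the value at `0` localizes the maximum point.
  have hzr : ‖z‖ ≤ r := by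
    have : e * ‖z‖ ^ 2 ≤ e * r ^ 2 := by linarith
    exact (pow_le_pow_iff_left₀ (norm_nonneg z) hr.le two_ne_zero).mp
      (le_of_mul_le_mul_left this he)
  refine ⟨u, hu, z, hzr.trans hre, hsub hy, ?_, ?_, ?_⟩
  · have h1 := hsmall z (by rw [dist_zero_right]; linarith)
    simp only [Real.dist_eq, inner_zero_right, quadForm, map_zero, mul_zero, add_zero,
      sub_zero] at h1
    have h2 := abs_lt.mp h1
    change _ < ⟪p, z⟫ + 1 / 2 * quadForm X z ∧ ⟪p, z⟫ + 1 / 2 * quadForm X z < _ at h2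
    have h3 : e * r ^ 2 ≤ e / 2 := by
      have : r ^ 2 ≤ 1 / 2 := by nlinarith
      nlinarith
    have h4 : e * ‖z‖ ^ 2 ≤ e * r ^ 2 := by gcongr
    have h5 : 0 ≤ e * ‖z‖ ^ 2 := by positivity
    rw [abs_le]
    constructor <;> linarith [h2.1, h2.2]
  · exact hX.add (Matrix.isSymm_one.smul _)
  · intro ε hε
    refine ⟨r, hr, fun h hh _ => ?_⟩
    have h1 := hmax' (z + h) ((norm_add_le z h).trans (by linarith))
    have h2 : φ (z + h) - φ z = ⟪p + Matrix.toEuclideanLin X z + (4 * e) • z, h⟫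
        + (1 / 2) * quadForm (X + (4 * e) • (1 : Matrix (Fin n) (Fin n) ℝ)) h := by
      simp only [hφ, quadForm_add hX, quadForm_add_smul_one, norm_add_sq_real, inner_add_left,
        inner_add_right, real_inner_smul_left]
      ring
    have h3 : 0 ≤ ε * ‖h‖ ^ 2 := by positivity
    rw [add_assoc x z h]
    linarith

/-- suprema of subsolutions: if `𝒰` is a family of upper semicontinuous
viscosity subsolutions of `F ≥ 0` on `Ω`, `U(x) = sup{u(x) : u ∈ 𝒰}` is finite at each
`x ∈ Ω` (i.e. it is a least upper bound in `ℝ`), and `U` is upper semicontinuous on `Ω`,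
then `U` is a viscosity subsolution of `F ≥ 0` on `Ω`. -/
theorem stmt_10 {n : ℕ} (Ω : Set (EuclideanSpace ℝ (Fin n))) (hΩ : IsOpen Ω)
    (F : EuclideanSpace ℝ (Fin n) × ℝ × EuclideanSpace ℝ (Fin n) ×
      Matrix (Fin n) (Fin n) ℝ → ℝ)
    (hFc : ContinuousOn F
      (Ω ×ˢ (Set.univ : Set (ℝ × EuclideanSpace ℝ (Fin n) × Matrix (Fin n) (Fin n) ℝ))))
    (𝒰 : Set (EuclideanSpace ℝ (Fin n) → ℝ))
    (husc : ∀ u ∈ 𝒰, UpperSemicontinuousOn u Ω)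
    (hsub : ∀ u ∈ 𝒰, ViscSubsol Ω F u)
    (U : EuclideanSpace ℝ (Fin n) → ℝ)
    (hU : ∀ x ∈ Ω, IsLUB ((fun u : EuclideanSpace ℝ (Fin n) → ℝ => u x) '' 𝒰) (U x))
    (hUusc : UpperSemicontinuousOn U Ω) :
    ViscSubsol Ω F U := by
  intro x hx p X hJ
  have he : ∀ k : ℕ, (0 : ℝ) < 1 / ((k : ℝ) + 1) := fun k => by positivity
  choose u hu z hz hzΩ hval hjet using fun k => exists_nearby_jet hΩ husc hU hx hJ (he k)
  have he0 : Tendsto (fun k : ℕ => 1 / ((k : ℝ) + 1)) atTop (nhds 0) :=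
    tendsto_one_div_add_atTop_nhds_zero_nat
  have hz0 : Tendsto z atTop (nhds 0) := squeeze_zero_norm hz he0
  have hx0 : Tendsto (fun k => x + z k) atTop (nhds x) := by
    simpa using hz0.const_add x
  have hs0 : Tendsto (fun k => u k (x + z k)) atTop (nhds (U x)) := by
    rw [tendsto_iff_dist_tendsto_zero]
    exact squeeze_zero (fun _ => dist_nonneg) hval he0
  have hX0 : Tendsto (fun k : ℕ => X + (4 * (1 / ((k : ℝ) + 1))) • (1 : Matrix (Fin n) (Fin n) ℝ))
      atTop (nhds X) := by
    simpa using ((he0.const_mul 4).smul_const (1 : Matrix (Fin n) (Fin n) ℝ)).const_add X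
  have hL : Continuous (Matrix.toEuclideanLin X) := LinearMap.continuous_of_finiteDimensional _
  have hp0 : Tendsto (fun k : ℕ => p + Matrix.toEuclideanLin X (z k)
      + (4 * (1 / ((k : ℝ) + 1))) • z k) atTop (nhds p) := by
    simpa using (((hL.tendsto 0).comp hz0).const_add p).add ((he0.const_mul 4).smul hz0)
  have hF := (hFc (x, U x, p, X) ⟨hx, trivial⟩).tendsto.comp
    (tendsto_nhdsWithin_iff.mpr ⟨hx0.prodMk_nhds (hs0.prodMk_nhds (hp0.prodMk_nhds hX0)),
      Eventually.of_forall fun k => ⟨hzΩ k, trivial⟩⟩)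
  exact ge_of_tendsto' hF fun k => hsub (u k) (hu k) _ (hzΩ k) _ _ (hjet k)

end
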